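/- Let A_1, ..., A_k be events in a family I closed under intersections and unions in which any two events are positively correlated. With X = Σ_i 1_{A_i}, μ = E[X], Δ = Σ_i Σ_{j~i} Pr(A_i ∩ A_j), and φ(x) = (1+x)log(1+x) − x (with φ(−1) = 1), for all 0 ≤ t ≤ μ: Pr(X ≤ μ − t) ≤ exp(−φ(−t/μ)μ²/(μ + Δ)). -/

import Mathlib

open MeasureTheory Finset Real
open scoped Classical

lemma jan_integral_mix {Ω : Type*} [MeasurableSpace Ω] (P : Measure Ω) [IsProbabilityMeasure P]
    {α β : Type*} (s : Finset α) (r : Finset β) (w : α → ℝ) (v : β → ℝ)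
    (F : α → Set Ω) (G : β → Set Ω)
    (hF : ∀ a ∈ s, MeasurableSet (F a)) (hG : ∀ b ∈ r, MeasurableSet (G b))
    (hw : ∀ a ∈ s, 0 ≤ w a) (hv : ∀ b ∈ r, 0 ≤ v b)
    (h : ∀ a ∈ s, ∀ b ∈ r, P.real (F a) * P.real (G b) ≤ P.real (F a ∩ G b)) :
    (∫ ω, ∑ a ∈ s, w a * (F a).indicator (fun _ => (1 : ℝ)) ω ∂P) *
      (∫ ω, ∑ b ∈ r, v b * (G b).indicator (fun _ => (1 : ℝ)) ω ∂P) ≤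
    ∫ ω, (∑ a ∈ s, w a * (F a).indicator (fun _ => (1 : ℝ)) ω) *
      (∑ b ∈ r, v b * (G b).indicator (fun _ => (1 : ℝ)) ω) ∂P := by
  have hIntg : ∀ (B : Set Ω) (c : ℝ), MeasurableSet B →
      Integrable (fun ω => c * B.indicator (fun _ => (1 : ℝ)) ω) P := fun B c hB =>
    ((integrable_const (1 : ℝ)).indicator hB).const_mul c
  have hval : ∀ (B : Set Ω) (c : ℝ), MeasurableSet B →
      ∫ ω, c * B.indicator (fun _ => (1 : ℝ)) ω ∂P = c * P.real B := by
    intro B c hB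
    rw [integral_const_mul, integral_indicator_const _ hB]; simp
  have e : ∀ ω, (∑ a ∈ s, w a * (F a).indicator (fun _ => (1 : ℝ)) ω) *
      (∑ b ∈ r, v b * (G b).indicator (fun _ => (1 : ℝ)) ω) =
      ∑ a ∈ s, ∑ b ∈ r, (w a * v b) * (F a ∩ G b).indicator (fun _ => (1 : ℝ)) ω := by
    intro ω
    rw [Finset.sum_mul_sum]
    refine Finset.sum_congr rfl fun a _ => Finset.sum_congr rfl fun b _ => ?_
    by_cases h1 : ω ∈ F a <;> by_cases h2 : ω ∈ G b <;> simp [h1, h2]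
  simp_rw [e]
  rw [integral_finsetSum _ (fun a ha => hIntg _ _ (hF a ha)),
    integral_finsetSum _ (fun b hb => hIntg _ _ (hG b hb)),
    integral_finsetSum _ (fun a ha => integrable_finsetSum _
      (fun b hb => hIntg _ _ ((hF a ha).inter (hG b hb)))), Finset.sum_mul_sum]
  refine Finset.sum_le_sum fun a ha => ?_
  rw [integral_finsetSum _ (fun b hb => hIntg _ _ ((hF a ha).inter (hG b hb)))]
  refine Finset.sum_le_sum fun b hb => ?_
  rw [hval _ _ (hF a ha), hval _ _ (hG b hb), hval _ _ ((hF a ha).inter (hG b hb))]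
  have := mul_le_mul_of_nonneg_left (h a ha b hb) (mul_nonneg (hw a ha) (hv b hb))
  linarith

lemma jan_prod_mix {Ω : Type*} {ι : Type*} (A : ι → Set Ω) (p : ℝ) (T : Finset ι) (ω : Ω) :
    ∏ j ∈ T, (1 - p * (A j).indicator (fun _ => (1 : ℝ)) ω) =
    ∑ S ∈ T.powerset, (p ^ #S * (1 - p) ^ #(T \ S)) *
      ((⋃ j ∈ S, A j)ᶜ).indicator (fun _ => (1 : ℝ)) ω := by
  have e : ∀ j, 1 - p * (A j).indicator (fun _ => (1 : ℝ)) ω =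
      p * ((A j)ᶜ).indicator (fun _ => (1 : ℝ)) ω + (1 - p) := by
    intro j
    by_cases h : ω ∈ A j <;> simp [h]
  simp_rw [e]
  rw [Finset.prod_add]
  refine Finset.sum_congr rfl fun S _ => ?_
  rw [Finset.prod_mul_distrib, Finset.prod_const, Finset.prod_const]
  have : ∏ j ∈ S, ((A j)ᶜ).indicator (fun _ => (1 : ℝ)) ω =
      ((⋃ j ∈ S, A j)ᶜ).indicator (fun _ => (1 : ℝ)) ω := by
    by_cases h : ω ∈ ⋃ j ∈ S, A j
    · rw [Set.indicator_of_notMem (by simpa using h)]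
      simp only [Set.mem_iUnion] at h
      obtain ⟨j, hj, h⟩ := h
      exact Finset.prod_eq_zero hj (by simp [h])
    · rw [Set.indicator_of_mem (by simpa using h)]
      simp only [Set.mem_iUnion, not_exists] at h
      exact Finset.prod_eq_one fun j hj => by simp [h j hj]
  rw [this]; ring

lemma jan_union_mem {Ω ι : Type*} (J : Set (Set Ω)) (h0 : ∅ ∈ J)
    (hunion : ∀ A ∈ J, ∀ B ∈ J, A ∪ B ∈ J) (A : ι → Set Ω) (hA : ∀ i, A i ∈ J) (S : Finset ι) :
    (⋃ j ∈ S, A j) ∈ J := by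
  induction S using Finset.induction_on with
  | empty => simpa using h0
  | insert a S _ ih =>
    rw [Finset.set_biUnion_insert]
    exact hunion _ (hA a) _ ih

lemma jan_indep_union {Ω ι : Type*} [MeasurableSpace Ω] (P : Measure Ω) [IsProbabilityMeasure P]
    (J : Set (Set Ω)) (h0 : ∅ ∈ J) (hm : ∀ A ∈ J, MeasurableSet A)
    (hcorr : ∀ A ∈ J, ∀ B ∈ J, P.real A * P.real B ≤ P.real (A ∩ B))
    (hinter : ∀ A ∈ J, ∀ B ∈ J, A ∩ B ∈ J)
    (hunion : ∀ A ∈ J, ∀ B ∈ J, A ∪ B ∈ J) (A : ι → Set Ω) (hA : ∀ i, A i ∈ J)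
    (B : Set Ω) (hB : B ∈ J) (S : Finset ι)
    (hS : ∀ j ∈ S, P.real (B ∩ A j) = P.real B * P.real (A j)) :
    P.real (B ∩ ⋃ j ∈ S, A j) = P.real B * P.real (⋃ j ∈ S, A j) := by
  induction S using Finset.induction_on with
  | empty => simp
  | insert a S _ ih =>
    rw [Finset.set_biUnion_insert]
    have ih' := ih (fun j hj => hS j (Finset.mem_insert_of_mem hj))
    have ha := hS a (Finset.mem_insert_self _ _)
    have hU := jan_union_mem J h0 hunion A hA S
    generalize (⋃ j ∈ S, A j) = U at *
    have h1 := measureReal_union_add_inter (μ := P) (s := A a) (hm U hU)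
    have h2 := measureReal_union_add_inter (μ := P) (s := B ∩ A a) ((hm B hB).inter (hm U hU))
    rw [← Set.inter_union_distrib_left, ← Set.inter_inter_distrib_left] at h2
    have h3 := hcorr B hB _ (hunion _ (hA a) _ hU)
    have h4 := hcorr B hB _ (hinter _ (hA a) _ hU)
    have h5 : P.real B * (P.real (A a ∪ U) + P.real (A a ∩ U)) =
      P.real B * (P.real (A a) + P.real U) := by rw [h1]
    linarith

lemma jan_set {Ω : Type*} [MeasurableSpace Ω] (P : Measure Ω) [IsProbabilityMeasure P]
    (B U V : Set Ω) (hU : MeasurableSet U) (hV : MeasurableSet V)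
    (h1 : P.real (B ∩ V) = P.real B * P.real V)
    (h2 : P.real (B ∩ U) * P.real V ≤ P.real (B ∩ U ∩ V)) :
    P.real (B ∩ Uᶜ) * P.real Vᶜ ≤ P.real (B ∩ Uᶜ ∩ Vᶜ) := by
  have a1 := measureReal_inter_add_sdiff (μ := P) (s := B) hU
  have a2 := measureReal_inter_add_sdiff (μ := P) (s := B ∩ Uᶜ) hV
  have a3 := measureReal_inter_add_sdiff (μ := P) (s := B ∩ V) hU
  have a4 := probReal_compl_eq_one_sub (μ := P) hV
  rw [Set.sdiff_eq] at a1 a2 a3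
  have e1 : B ∩ V ∩ U = B ∩ U ∩ V := by ext; simp; tauto
  have e2 : B ∩ V ∩ Uᶜ = B ∩ Uᶜ ∩ V := by ext; simp; tauto
  rw [e1, e2] at a3
  rw [a4]
  have : P.real (B ∩ Uᶜ) * P.real V = P.real B * P.real V - P.real (B ∩ U) * P.real V := by
    rw [← a1]; ring
  linarith

/-- Conditional-type correlation inequality. -/
lemma jan_key {Ω ι : Type*} [MeasurableSpace Ω] (P : Measure Ω) [IsProbabilityMeasure P]
    (J : Set (Set Ω)) (h0 : ∅ ∈ J) (hm : ∀ A ∈ J, MeasurableSet A)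
    (hcorr : ∀ A ∈ J, ∀ B ∈ J, P.real A * P.real B ≤ P.real (A ∩ B))
    (hinter : ∀ A ∈ J, ∀ B ∈ J, A ∩ B ∈ J)
    (hunion : ∀ A ∈ J, ∀ B ∈ J, A ∪ B ∈ J) (A : ι → Set Ω) (hA : ∀ i, A i ∈ J)
    (B : Set Ω) (hB : B ∈ J) (T R : Finset ι)
    (hR : ∀ j ∈ R, P.real (B ∩ A j) = P.real B * P.real (A j))
    (p : ℝ) (hp0 : 0 ≤ p) (hp1 : p ≤ 1) :
    (∫ ω, B.indicator (fun _ => (1 : ℝ)) ω *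
        ∏ j ∈ T, (1 - p * (A j).indicator (fun _ => (1 : ℝ)) ω) ∂P) *
      (∫ ω, ∏ j ∈ R, (1 - p * (A j).indicator (fun _ => (1 : ℝ)) ω) ∂P) ≤
    ∫ ω, (B.indicator (fun _ => (1 : ℝ)) ω *
        ∏ j ∈ T, (1 - p * (A j).indicator (fun _ => (1 : ℝ)) ω)) *
      ∏ j ∈ R, (1 - p * (A j).indicator (fun _ => (1 : ℝ)) ω) ∂P := by
  have e : ∀ ω, B.indicator (fun _ => (1 : ℝ)) ω *
        ∏ j ∈ T, (1 - p * (A j).indicator (fun _ => (1 : ℝ)) ω) =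
      ∑ S ∈ T.powerset, (p ^ #S * (1 - p) ^ #(T \ S)) *
      (B ∩ (⋃ j ∈ S, A j)ᶜ).indicator (fun _ => (1 : ℝ)) ω := by
    intro ω
    rw [jan_prod_mix, Finset.mul_sum]
    refine Finset.sum_congr rfl fun S _ => ?_
    generalize (⋃ j ∈ S, A j)ᶜ = N
    by_cases h : ω ∈ B <;> by_cases h' : ω ∈ N <;> simp [h, h']
  simp_rw [e, jan_prod_mix A p R]
  have hU := jan_union_mem J h0 hunion A hA
  apply jan_integral_mix
  · intro S _; exact (hm _ hB).inter (hm _ (hU S)).compl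
  · intro S _; exact (hm _ (hU S)).compl
  · intro S _; have : 0 ≤ 1 - p := by linarith
    positivity
  · intro S _; have : 0 ≤ 1 - p := by linarith
    positivity
  · intro S _ Q hQ
    refine jan_set P B _ _ (hm _ (hU S)) (hm _ (hU Q)) ?_ ?_
    · exact jan_indep_union P J h0 hm hcorr hinter hunion A hA B hB Q
        (fun j hj => hR j (Finset.mem_powerset.1 hQ hj))
    · exact hcorr _ (hinter _ hB _ (hU S)) _ (hU Q)

lemma jan_exp_prod {Ω ι : Type*} (A : ι → Set Ω) (s : ℝ) (T : Finset ι) (ω : Ω) :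
    Real.exp (-s * ∑ j ∈ T, (A j).indicator (fun _ => (1 : ℝ)) ω) =
    ∏ j ∈ T, (1 - (1 - Real.exp (-s)) * (A j).indicator (fun _ => (1 : ℝ)) ω) := by
  rw [Finset.mul_sum, Real.exp_sum]
  refine Finset.prod_congr rfl fun j _ => ?_
  by_cases h : ω ∈ A j <;> simp [h]

lemma jan_deriv {Ω ι : Type*} [Fintype ι] [MeasurableSpace Ω] (P : Measure Ω)
    [IsProbabilityMeasure P]
    (J : Set (Set Ω)) (h0 : ∅ ∈ J) (hm : ∀ A ∈ J, MeasurableSet A)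
    (hcorr : ∀ A ∈ J, ∀ B ∈ J, P.real A * P.real B ≤ P.real (A ∩ B))
    (hinter : ∀ A ∈ J, ∀ B ∈ J, A ∩ B ∈ J)
    (hunion : ∀ A ∈ J, ∀ B ∈ J, A ∪ B ∈ J) (A : ι → Set Ω) (hA : ∀ i, A i ∈ J)
    (T : ι → Finset ι)
    (hT : ∀ i, ∀ j ∉ T i, P.real (A i ∩ A j) = P.real (A i) * P.real (A j))
    (X : Ω → ℝ) (hX : ∀ ω, X ω = ∑ i, (A i).indicator (fun _ => (1 : ℝ)) ω)
    (m M : ℝ) (hmm : m = ∑ i, P.real (A i)) (hM : M = ∑ i, ∑ j ∈ T i, P.real (A i ∩ A j))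
    (c : ℝ) (hc : c * m = M) (s : ℝ) (hs : 0 ≤ s) :
    m * Real.exp (-s * c) * (∫ ω, Real.exp (-s * X ω) ∂P) ≤
      ∫ ω, X ω * Real.exp (-s * X ω) ∂P := by
  have hAm := fun i => hm _ (hA i)
  have hp0 : 0 ≤ 1 - Real.exp (-s) := by
    have : Real.exp (-s) ≤ 1 := Real.exp_le_one_iff.2 (by linarith)
    linarith
  have hp1 : 1 - Real.exp (-s) ≤ 1 := by linarith [Real.exp_pos (-s)]
  have hind : ∀ i, Measurable (fun ω => (A i).indicator (fun _ => (1 : ℝ)) ω) := fun i =>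
    measurable_const.indicator (hAm i)
  have hi0 : ∀ i ω, 0 ≤ (A i).indicator (fun _ => (1 : ℝ)) ω := fun i ω =>
    Set.indicator_nonneg (fun _ _ => zero_le_one) ω
  have hi1 : ∀ i ω, (A i).indicator (fun _ => (1 : ℝ)) ω ≤ 1 := fun i ω => by
    by_cases h : ω ∈ A i <;> simp [h]
  set Y : Finset ι → Ω → ℝ := fun S ω => ∑ j ∈ S, (A j).indicator (fun _ => (1 : ℝ)) ω with hY
  have hYm : ∀ S, Measurable (Y S) := fun S => Finset.measurable_sum _ fun j _ => hind j
  have hY0 : ∀ S ω, 0 ≤ Y S ω := fun S ω => Finset.sum_nonneg fun j _ => hi0 j ω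
  have hE1 : ∀ S ω, Real.exp (-s * Y S ω) ≤ 1 := fun S ω =>
    Real.exp_le_one_iff.2 (by nlinarith [hY0 S ω])
  have hEm : ∀ S, Measurable (fun ω => Real.exp (-s * Y S ω)) := fun S =>
    Real.measurable_exp.comp ((hYm S).const_mul _)
  have hEint : ∀ S, Integrable (fun ω => Real.exp (-s * Y S ω)) P := fun S =>
    Integrable.of_bound (hEm S).aestronglyMeasurable 1 (ae_of_all _ fun ω => by
      rw [Real.norm_eq_abs, abs_of_pos (Real.exp_pos _)]; exact hE1 S ω)
  have hEiint : ∀ i S, Integrable (fun ω => (A i).indicator (fun _ => (1 : ℝ)) ω *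
      Real.exp (-s * Y S ω)) P := fun i S =>
    Integrable.of_bound ((hind i).mul (hEm S)).aestronglyMeasurable 1 (ae_of_all _ fun ω => by
      rw [Real.norm_eq_abs, abs_of_nonneg (mul_nonneg (hi0 i ω) (Real.exp_pos _).le)]
      exact mul_le_one₀ (hi1 i ω) (Real.exp_pos _).le (hE1 S ω))
  have hXY : ∀ ω, X ω = Y univ ω := hX
  have hIntg : ∀ (B : Set Ω), MeasurableSet B →
      Integrable (fun ω => B.indicator (fun _ => (1 : ℝ)) ω) P := fun B hB =>
    ((integrable_const (1 : ℝ)).indicator hB)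
  have hval : ∀ (B : Set Ω), MeasurableSet B →
      ∫ ω, B.indicator (fun _ => (1 : ℝ)) ω ∂P = P.real B := by
    intro B hB
    rw [integral_indicator_const _ hB]; simp
  -- step 1
  have step1 : ∀ i, (∫ ω, (A i).indicator (fun _ => (1 : ℝ)) ω * Real.exp (-s * Y (T i) ω) ∂P) *
      (∫ ω, Real.exp (-s * Y univ ω) ∂P) ≤
      ∫ ω, (A i).indicator (fun _ => (1 : ℝ)) ω * Real.exp (-s * Y univ ω) ∂P := by
    intro i
    have key := jan_key P J h0 hm hcorr hinter hunion A hA (A i) (hA i) (T i) (T i)ᶜ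
      (fun j hj => hT i j (by simpa using hj)) _ hp0 hp1
    simp_rw [← jan_exp_prod] at key
    have hsplit : ∀ ω, Y univ ω = Y (T i) ω + Y (T i)ᶜ ω := fun ω =>
      (Finset.sum_add_sum_compl (T i) _).symm
    have e : ∀ ω, (A i).indicator (fun _ => (1 : ℝ)) ω * Real.exp (-s * Y univ ω) =
        (A i).indicator (fun _ => (1 : ℝ)) ω * Real.exp (-s * Y (T i) ω) *
          Real.exp (-s * Y (T i)ᶜ ω) := fun ω => by
      rw [hsplit, mul_add, Real.exp_add]; ring
    simp_rw [e]
    refine le_trans ?_ key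
    refine mul_le_mul_of_nonneg_left ?_ (integral_nonneg fun ω =>
      mul_nonneg (hi0 i ω) (Real.exp_pos _).le)
    refine integral_mono (hEint _) (hEint _) fun ω => ?_
    refine Real.exp_le_exp.2 ?_
    have h1 := hsplit ω
    have h2 := hY0 (T i) ω
    have : Y (T i)ᶜ ω ≤ Y univ ω := by linarith
    exact mul_le_mul_of_nonpos_left this (by linarith)
  -- step 2
  have step2 : ∀ i, Real.exp (-s * c) * ((1 + s * c) * P.real (A i) -
      s * ∑ j ∈ T i, P.real (A i ∩ A j)) ≤
      ∫ ω, (A i).indicator (fun _ => (1 : ℝ)) ω * Real.exp (-s * Y (T i) ω) ∂P := by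
    intro i
    have hI : Integrable (fun ω => ∑ j ∈ T i, (A i ∩ A j).indicator (fun _ => (1 : ℝ)) ω) P :=
      integrable_finsetSum _ fun j _ => hIntg _ ((hAm i).inter (hAm j))
    have e : Real.exp (-s * c) * ((1 + s * c) * P.real (A i) -
      s * ∑ j ∈ T i, P.real (A i ∩ A j)) =
      ∫ ω, Real.exp (-s * c) * ((1 + s * c) * (A i).indicator (fun _ => (1 : ℝ)) ω -
        s * ∑ j ∈ T i, (A i ∩ A j).indicator (fun _ => (1 : ℝ)) ω) ∂P := by
      rw [integral_const_mul, integral_sub ((hIntg _ (hAm i)).const_mul _) (hI.const_mul _),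
        integral_const_mul, integral_const_mul, hval _ (hAm i),
        integral_finsetSum _ fun j _ => hIntg _ ((hAm i).inter (hAm j))]
      congr 3
      exact Finset.sum_congr rfl fun j _ => (hval _ ((hAm i).inter (hAm j))).symm
    rw [e]
    refine integral_mono ((((hIntg _ (hAm i)).const_mul _).sub (hI.const_mul _)).const_mul _)
      (hEiint _ _) fun ω => ?_
    by_cases h : ω ∈ A i
    · have e2 : ∑ j ∈ T i, (A i ∩ A j).indicator (fun _ => (1 : ℝ)) ω = Y (T i) ω :=
        Finset.sum_congr rfl fun j _ => by by_cases h' : ω ∈ A j <;> simp [h, h']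
      simp only [e2, Set.indicator_of_mem h, mul_one, one_mul]
      have := Real.add_one_le_exp (s * c - s * Y (T i) ω)
      have e3 : Real.exp (-s * Y (T i) ω) =
        Real.exp (-s * c) * Real.exp (s * c - s * Y (T i) ω) := by
        rw [← Real.exp_add]; congr 1; ring
      rw [e3]
      exact mul_le_mul_of_nonneg_left (by linarith) (Real.exp_pos _).le
    · have e2 : ∑ j ∈ T i, (A i ∩ A j).indicator (fun _ => (1 : ℝ)) ω = 0 :=
        Finset.sum_eq_zero fun j _ => by simp [h]
      simp only [e2, Set.indicator_of_notMem h]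
      simp
  have hΨ : 0 ≤ ∫ ω, Real.exp (-s * Y univ ω) ∂P := integral_nonneg fun ω => (Real.exp_pos _).le
  have lhs : m * Real.exp (-s * c) = ∑ i, Real.exp (-s * c) * ((1 + s * c) * P.real (A i) -
      s * ∑ j ∈ T i, P.real (A i ∩ A j)) := by
    rw [← Finset.mul_sum, Finset.sum_sub_distrib, ← Finset.mul_sum, ← Finset.mul_sum, ← hmm, ← hM,
      ← hc]
    ring
  simp_rw [hXY]
  have rhs : ∫ ω, Y univ ω * Real.exp (-s * Y univ ω) ∂P =
      ∑ i, ∫ ω, (A i).indicator (fun _ => (1 : ℝ)) ω * Real.exp (-s * Y univ ω) ∂P := by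
    rw [← integral_finsetSum _ fun i _ => hEiint i univ]
    refine integral_congr_ae (ae_of_all _ fun ω => ?_)
    simp only [hY]
    rw [Finset.sum_mul]
  rw [lhs, rhs, Finset.sum_mul]
  exact Finset.sum_le_sum fun i _ =>
    (mul_le_mul_of_nonneg_right (step2 i) hΨ).trans (step1 i)

lemma jan_mgf {Ω : Type*} [MeasurableSpace Ω] (P : Measure Ω) [IsProbabilityMeasure P]
    (X : Ω → ℝ) (hIntg : ∀ t : ℝ, Integrable (fun ω => Real.exp (t * X ω)) P)
    (m c κ : ℝ) (hκ : κ * c = m)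
    (hd : ∀ s : ℝ, 0 ≤ s → m * Real.exp (-s * c) * (∫ ω, Real.exp (-s * X ω) ∂P) ≤
      ∫ ω, X ω * Real.exp (-s * X ω) ∂P) (s : ℝ) (hs : 0 ≤ s) :
    ProbabilityTheory.mgf X P (-s) ≤ Real.exp (-(κ * (1 - Real.exp (-s * c)))) := by
  set H : ℝ → ℝ := fun s => ProbabilityTheory.mgf X P (-s) *
    Real.exp (κ * (1 - Real.exp (-s * c))) with hH
  have hset : ProbabilityTheory.integrableExpSet X P = Set.univ := by
    ext t; simpa [ProbabilityTheory.integrableExpSet] using hIntg t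
  have hder : ∀ s, HasDerivAt H
      ((-(∫ ω, X ω * Real.exp (-s * X ω) ∂P)) * Real.exp (κ * (1 - Real.exp (-s * c))) +
        ProbabilityTheory.mgf X P (-s) *
          (Real.exp (κ * (1 - Real.exp (-s * c))) * (m * Real.exp (-s * c)))) s := by
    intro s
    have h1 : HasDerivAt (ProbabilityTheory.mgf X P) (∫ ω, X ω * Real.exp (-s * X ω) ∂P) (-s) :=
      ProbabilityTheory.hasDerivAt_mgf (by rw [hset]; simp)
    have h2 := h1.comp s (hasDerivAt_neg s)
    have h3 : HasDerivAt (fun s : ℝ => Real.exp (κ * (1 - Real.exp (-s * c))))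
        (Real.exp (κ * (1 - Real.exp (-s * c))) * (m * Real.exp (-s * c))) s := by
      have := ((((hasDerivAt_neg s).mul_const c).exp.const_sub 1).const_mul κ).exp
      convert this using 1
      rw [← hκ]; ring
    rw [mul_neg_one] at h2
    exact h2.mul h3
  have hanti : AntitoneOn H (Set.Ici 0) := by
    refine antitoneOn_of_deriv_nonpos (convex_Ici 0)
      (fun x _ => (hder x).continuousAt.continuousWithinAt)
      (fun x _ => (hder x).differentiableAt.differentiableWithinAt) fun x hx => ?_
    rw [(hder x).deriv]
    rw [interior_Ici] at hx
    have h1 := hd x (le_of_lt hx)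
    have h2 := Real.exp_pos (κ * (1 - Real.exp (-x * c)))
    have h3 : m * Real.exp (-x * c) * ProbabilityTheory.mgf X P (-x) ≤
      ∫ ω, X ω * Real.exp (-x * X ω) ∂P := h1
    nlinarith [mul_le_mul_of_nonneg_left h3 h2.le]
  have h := hanti (Set.mem_Ici.2 le_rfl) (Set.mem_Ici.2 hs) hs
  have hH0 : H 0 = 1 := by simp [hH]
  rw [hH0] at h
  rw [Real.exp_neg, ← one_div, le_div_iff₀ (Real.exp_pos _)]
  exact h

theorem janson_lower_tail_phi_general_upsets
    {Ω : Type*} [MeasurableSpace Ω] (P : Measure Ω) [IsProbabilityMeasure P]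
    (I : Set (Set Ω))
    (hcorr : ∀ A ∈ I, ∀ B ∈ I, P (A ∩ B) ≥ P A * P B)
    (hinter : ∀ A ∈ I, ∀ B ∈ I, A ∩ B ∈ I)
    (hunion : ∀ A ∈ I, ∀ B ∈ I, A ∪ B ∈ I)
    (k : ℕ) (A : Fin k → Set Ω) (hA : ∀ i, A i ∈ I)
    (hAmeas : ∀ i, MeasurableSet (A i))
    (sim : Fin k → Fin k → Prop)
    (hsim : ∀ i j, sim i j ↔ i ≠ j ∧ P (A i ∩ A j) ≠ P (A i) * P (A j))
    (X : Ω → ℝ) (hX : ∀ ω, X ω = ∑ i : Fin k, if ω ∈ A i then (1 : ℝ) else 0)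
    (μ Δ : ℝ)
    (hμ : μ = ∑ i : Fin k, (P (A i)).toReal)
    (hΔ : Δ = ∑ i : Fin k, ∑ j ∈ Finset.univ.filter (fun j => sim i j),
        (P (A i ∩ A j)).toReal)
    (φ : ℝ → ℝ) (hφ : ∀ x, φ x = (1 + x) * Real.log (1 + x) - x) :
    ∀ t : ℝ, 0 ≤ t → t ≤ μ →
      (P {ω | X ω ≤ μ - t}).toReal ≤ Real.exp (-(φ (-t / μ) * μ ^ 2) / (μ + Δ)) := by
  have hμ0 : 0 ≤ μ := hμ ▸ Finset.sum_nonneg fun i _ => ENNReal.toReal_nonneg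
  have hΔ0 : 0 ≤ Δ := hΔ ▸ Finset.sum_nonneg fun i _ => Finset.sum_nonneg fun j _ =>
    ENNReal.toReal_nonneg
  rcases hμ0.eq_or_lt with h | hμpos
  · intro t _ _
    rw [← h]
    simpa using (prob_le_one : P {ω | X ω ≤ 0 - t} ≤ 1) |> fun h =>
      ENNReal.toReal_mono ENNReal.one_ne_top h
  -- the lattice
  set J : Set (Set Ω) := {B | B = ∅ ∨ (B ∈ I ∧ MeasurableSet B)} with hJ
  have Jm : ∀ B ∈ J, MeasurableSet B := by
    rintro B (rfl | h)
    · exact MeasurableSet.empty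
    · exact h.2
  have Jcorr : ∀ B ∈ J, ∀ C ∈ J, P.real B * P.real C ≤ P.real (B ∩ C) := by
    rintro B (rfl | h) C (rfl | h')
    · simp
    · simp
    · simp
    · have := hcorr B h.1 C h'.1
      simp only [Measure.real]
      rw [← ENNReal.toReal_mul]
      exact ENNReal.toReal_mono (measure_ne_top _ _) this
  have Jinter : ∀ B ∈ J, ∀ C ∈ J, B ∩ C ∈ J := by
    rintro B (rfl | h) C (rfl | h')
    · left; simp
    · left; simp
    · left; simp
    · exact Or.inr ⟨hinter _ h.1 _ h'.1, h.2.inter h'.2⟩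
  have Junion : ∀ B ∈ J, ∀ C ∈ J, B ∪ C ∈ J := by
    rintro B (rfl | h) C (rfl | h')
    · left; simp
    · right; simpa using h'
    · right; simpa using h
    · exact Or.inr ⟨hunion _ h.1 _ h'.1, h.2.union h'.2⟩
  have JA : ∀ i, A i ∈ J := fun i => Or.inr ⟨hA i, hAmeas i⟩
  set T : Fin k → Finset (Fin k) := fun i => insert i (Finset.univ.filter (fun j => sim i j))
    with hTdef
  have hT : ∀ i, ∀ j ∉ T i, P.real (A i ∩ A j) = P.real (A i) * P.real (A j) := by
    intro i j hj
    simp only [hTdef, Finset.mem_insert, Finset.mem_filter, Finset.mem_univ, true_and,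
      not_or] at hj
    have h2 : P (A i ∩ A j) = P (A i) * P (A j) := by
      by_contra hne
      exact hj.2 ((hsim i j).2 ⟨fun h => hj.1 h.symm, hne⟩)
    simp only [Measure.real]
    rw [h2, ENNReal.toReal_mul]
  have hX' : ∀ ω, X ω = ∑ i, (A i).indicator (fun _ => (1 : ℝ)) ω := by
    intro ω; rw [hX]
    exact Finset.sum_congr rfl fun i _ => by by_cases h : ω ∈ A i <;> simp [h]
  have hM : μ + Δ = ∑ i, ∑ j ∈ T i, P.real (A i ∩ A j) := by
    rw [hμ, hΔ, ← Finset.sum_add_distrib]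
    refine Finset.sum_congr rfl fun i _ => ?_
    rw [hTdef]
    simp only
    rw [Finset.sum_insert (by simp [hsim]), Set.inter_self]
    rfl
  have hMpos : 0 < μ + Δ := by linarith
  set c := (μ + Δ) / μ with hc
  set κ := μ ^ 2 / (μ + Δ) with hκ
  have hcm : c * μ = μ + Δ := by rw [hc]; field_simp
  have hκc : κ * c = μ := by rw [hκ, hc]; field_simp
  have hXm : Measurable X := by
    have : X = fun ω => ∑ i, (A i).indicator (fun _ => (1 : ℝ)) ω := funext hX'
    rw [this]
    exact Finset.measurable_sum _ fun j _ => measurable_const.indicator (hAmeas j)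
  have hIntg : ∀ t : ℝ, Integrable (fun ω => Real.exp (t * X ω)) P := fun t =>
    ProbabilityTheory.integrable_exp_mul_of_mem_Icc (a := 0) (b := k) hXm.aemeasurable
      (ae_of_all _ fun ω => by
        rw [hX]
        constructor
        · exact Finset.sum_nonneg fun i _ => by split_ifs <;> norm_num
        · calc _ ≤ ∑ i : Fin k, (1 : ℝ) := Finset.sum_le_sum fun i _ => by
                split_ifs <;> norm_num
            _ = k := by simp)
  have hmgf := jan_mgf P X hIntg μ c κ hκc (fun s hs =>
    jan_deriv P J (Or.inl rfl) Jm Jcorr Jinter Junion A JA T hT X hX' μ (μ + Δ) hμ hM c hcm s hs)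
  -- strict case
  have main : ∀ t : ℝ, 0 ≤ t → t < μ →
      P.real {ω | X ω ≤ μ - t} ≤ Real.exp (-(φ (-t / μ) * μ ^ 2) / (μ + Δ)) := by
    intro t ht htμ
    set x := 1 - t / μ with hx
    have hx0 : 0 < x := by rw [hx, sub_pos, div_lt_one hμpos]; exact htμ
    have hx1 : x ≤ 1 := by rw [hx]; linarith [div_nonneg ht hμ0]
    have hcpos : 0 < c := div_pos hMpos hμpos
    set s := -Real.log x / c with hs
    have hs0 : 0 ≤ s := div_nonneg (by linarith [Real.log_nonpos hx0.le hx1]) hcpos.le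
    have h1 := ProbabilityTheory.measure_le_le_exp_mul_mgf (μ := P) (X := X) (t := -s) (μ - t)
      (by linarith) (hIntg _)
    refine h1.trans ((mul_le_mul_of_nonneg_left (hmgf s hs0) (Real.exp_pos _).le).trans ?_)
    rw [← Real.exp_add]
    refine Real.exp_le_exp.2 (le_of_eq ?_)
    have e1 : -s * c = Real.log x := by rw [hs]; field_simp
    rw [e1, Real.exp_log hx0, hφ]
    have e2 : 1 + -t / μ = x := by rw [hx]; ring
    have e3 : -t / μ = x - 1 := by rw [hx]; ring
    have e4 : μ - t = x * μ := by rw [hx]; field_simp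
    have e5 : s = -Real.log x * μ / (μ + Δ) := by rw [hs, hc]; field_simp
    rw [e2, e3, e4, e5, hκ]
    field_simp
    ring
  intro t ht htμ
  rcases htμ.lt_or_eq with h | h
  · exact main t ht h
  subst h
  have hcont : Continuous (fun u : ℝ => Real.exp (-(φ (-u / t) * t ^ 2) / (t + Δ))) := by
    simp_rw [hφ]
    have hc1 : Continuous (fun u : ℝ => (1 + -u / t) * Real.log (1 + -u / t)) :=
      Real.continuous_mul_log.comp (f := fun u : ℝ => 1 + -u / t) (by fun_prop)
    have hc2 : Continuous (fun u : ℝ => -u / t) := by fun_prop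
    exact Real.continuous_exp.comp ((((hc1.sub hc2).mul continuous_const).neg).div_const _)
  have htend : Filter.Tendsto (fun u : ℝ => Real.exp (-(φ (-u / t) * t ^ 2) / (t + Δ)))
      (nhdsWithin t (Set.Iio t)) (nhds (Real.exp (-(φ (-t / t) * t ^ 2) / (t + Δ)))) :=
    (hcont.tendsto t).mono_left nhdsWithin_le_nhds
  refine ge_of_tendsto htend ?_
  filter_upwards [Ioo_mem_nhdsLT hμpos] with u hu
  refine le_trans ?_ (main u hu.1.le hu.2)
  refine measureReal_mono ?_
  intro ω hω
  simp only [Set.mem_ofPred_eq] at hω ⊢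
  linarith [hu.2]
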